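/- For all natural numbers n ≥ 1 and real parameters a, b, x (with nonzero denominators), the Jacobi polynomials satisfy P_n^{(a+1,b−1)}(x) = (1/(n+1))·(P_{n+1}^{(a,b)})'(x) + (4(a+1+n)/((2n+2+a+b)(2n+a+b)))·(P_n^{(a,b)})'(x) + (4(a+1+n)(a+n)n/((2n+a+b−1)(2n+a+b+1)(2n+a+b)²))·(P_{n-1}^{(a,b)})'(x). -/

import Mathlib

/-- Rising factorial `(a)_k = a(a+1)⋯(a+k-1)`. -/
noncomputable def rf (a : ℝ) (k : ℕ) : ℝ := ∏ j ∈ Finset.range k, (a + j)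

/-- Monic Jacobi polynomials
`P_n^{(a,b)}(x) = ((a+1)_n 2^n / (n+a+b+1)_n) ∑_{k=0}^n
  ((-n)_k (n+a+b+1)_k / ((a+1)_k k!)) ((1-x)/2)^k`. -/
noncomputable def jacobi (a b : ℝ) (n : ℕ) (x : ℝ) : ℝ :=
  rf (a + 1) n * 2 ^ n / rf ((n : ℝ) + a + b + 1) n *
    ∑ k ∈ Finset.range (n + 1),
      rf (-(n : ℝ)) k * rf ((n : ℝ) + a + b + 1) k / (rf (a + 1) k * (k.factorial : ℝ)) *
        ((1 - x) / 2) ^ k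

/-- Derivative of the monic Jacobi polynomial with respect to `x`. -/
noncomputable def jacobiDeriv (a b : ℝ) (n : ℕ) (x : ℝ) : ℝ := deriv (jacobi a b n) x

/-!
Differentiation sends `P_n^{(a,b)}` to `n P_{n-1}^{(a+1,b+1)}`, which turns the claim into an
expansion of `P_n^{(a+1,b-1)}` in the polynomials `P_m^{(a+1,b+1)}`. That expansion is obtained by
applying twice the contiguous relation
`P_n^{(a,b)} = P_n^{(a,b+1)} + 2n(n+a)/((2n+a+b)(2n+a+b+1)) P_{n-1}^{(a,b+1)}`,
which holds coefficientwise in powers of `(1 - x) / 2`.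
-/

theorem rf_succ (a : ℝ) (k : ℕ) : rf a (k + 1) = rf a k * (a + k) :=
  Finset.prod_range_succ _ _

theorem rf_succ_left (a : ℝ) (k : ℕ) : rf a (k + 1) = a * rf (a + 1) k := by
  simp only [rf, Finset.prod_range_succ', Nat.cast_add, Nat.cast_one, Nat.cast_zero, add_zero,
    mul_comm a, add_assoc, add_comm (1 : ℝ)]

theorem rf_add_one {a : ℝ} (ha : a ≠ 0) (k : ℕ) : rf (a + 1) k = rf a k * (a + k) / a := by
  rw [eq_div_iff ha, mul_comm, ← rf_succ_left, rf_succ]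

theorem rf_neg_natCast_eq_zero {n k : ℕ} (h : n < k) : rf (-(n : ℝ)) k = 0 :=
  Finset.prod_eq_zero (Finset.mem_range.mpr h) (neg_add_cancel _)

theorem rf_ne_zero_iff {a : ℝ} {k : ℕ} : rf a k ≠ 0 ↔ ∀ j < k, a + j ≠ 0 := by
  simp only [rf, Finset.prod_ne_zero_iff, Finset.mem_range]

/-- The coefficient of `((1 - x) / 2) ^ k` in the monic Jacobi polynomial `jacobi a b n`. It is
defined for every `k`, so that polynomials of different degrees can be compared coefficientwise. -/
noncomputable def jacobiCoeff (a b : ℝ) (n k : ℕ) : ℝ :=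
  rf (a + 1) n * 2 ^ n / rf ((n : ℝ) + a + b + 1) n *
    (rf (-(n : ℝ)) k * rf ((n : ℝ) + a + b + 1) k / (rf (a + 1) k * (k.factorial : ℝ)))

theorem jacobiCoeff_eq_zero (a b : ℝ) {n k : ℕ} (h : n < k) : jacobiCoeff a b n k = 0 := by
  rw [jacobiCoeff, rf_neg_natCast_eq_zero h, zero_mul, zero_div, mul_zero]

theorem jacobi_eq_sum_range (a b x : ℝ) {n m : ℕ} (h : n < m) :
    jacobi a b n x = ∑ k ∈ Finset.range m, jacobiCoeff a b n k * ((1 - x) / 2) ^ k := by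
  have hsub : Finset.range (n + 1) ⊆ Finset.range m := Finset.range_mono h
  rw [← Finset.sum_subset hsub fun k _ hk => ?_, jacobi, Finset.mul_sum]
  · simp only [jacobiCoeff, mul_assoc]
  · rw [jacobiCoeff_eq_zero a b (by simpa using hk), zero_mul]

theorem jacobi_zero (a b x : ℝ) : jacobi a b 0 x = 1 := by
  simp [jacobi, rf]

theorem jacobiDeriv_eq_sum_range (a b x : ℝ) (n : ℕ) :
    jacobiDeriv a b n x =
      ∑ k ∈ Finset.range n, jacobiCoeff a b n (k + 1) * (-(k + 1) / 2) * ((1 - x) / 2) ^ k := by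
  have hbase : HasDerivAt (fun y : ℝ => (1 - y) / 2) (-1 / 2) x :=
    ((hasDerivAt_id x).const_sub 1).div_const 2
  have hsum : HasDerivAt
      (fun y : ℝ => ∑ k ∈ Finset.range (n + 1), jacobiCoeff a b n k * ((1 - y) / 2) ^ k) _ x :=
    HasDerivAt.fun_sum fun k _ => (hbase.fun_pow k).const_mul (jacobiCoeff a b n k)
  have hfun : jacobi a b n =
      fun y => ∑ k ∈ Finset.range (n + 1), jacobiCoeff a b n k * ((1 - y) / 2) ^ k :=
    funext fun y => jacobi_eq_sum_range a b y n.lt_succ_self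
  rw [jacobiDeriv, hfun, hsum.deriv, Finset.sum_range_succ']
  simp only [Nat.cast_zero, zero_mul, mul_zero, add_zero]
  refine Finset.sum_congr rfl fun k _ => ?_
  rw [Nat.add_sub_cancel]
  push_cast
  ring

theorem jacobiCoeff_succ_succ_mul {a b : ℝ} {n : ℕ} (ha : a + 1 ≠ 0)
    (hab : (n : ℝ) + 1 + a + b + 1 ≠ 0) (k : ℕ) :
    jacobiCoeff a b (n + 1) (k + 1) * (-(k + 1) / 2) =
      (n + 1) * jacobiCoeff (a + 1) (b + 1) n k := by
  have hk : (k : ℝ) + 1 ≠ 0 := k.cast_add_one_ne_zero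
  have hn : -((n : ℝ) + 1) + 1 = -n := by ring
  have hs : (n : ℝ) + (a + 1) + (b + 1) + 1 = n + 1 + a + b + 1 + 1 := by ring
  rw [jacobiCoeff, jacobiCoeff, hs, Nat.factorial_succ]
  push_cast
  rw [rf_succ_left (a + 1), rf_succ_left (a + 1), rf_succ_left (n + 1 + a + b + 1),
    rf_succ_left (n + 1 + a + b + 1), rf_succ_left (-((n : ℝ) + 1)), hn, pow_succ]
  field_simp

theorem jacobiDeriv_eq_mul_jacobi {a b : ℝ} {n : ℕ} (ha : a + 1 ≠ 0)
    (hab : rf ((n : ℝ) + a + b + 1) n ≠ 0) (x : ℝ) :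
    jacobiDeriv a b n x = n * jacobi (a + 1) (b + 1) (n - 1) x := by
  rw [jacobiDeriv_eq_sum_range]
  cases n with
  | zero => simp
  | succ n =>
    have hs : (n : ℝ) + 1 + a + b + 1 ≠ 0 := by
      simpa using rf_ne_zero_iff.mp hab 0 n.succ_pos
    rw [Nat.add_sub_cancel, jacobi_eq_sum_range _ _ _ n.lt_succ_self, Finset.mul_sum]
    refine Finset.sum_congr rfl fun k _ => ?_
    rw [jacobiCoeff_succ_succ_mul ha hs, Nat.cast_succ, mul_assoc]

theorem jacobiCoeff_succ_eq_jacobiCoeff_b_add_one {a b : ℝ} {n : ℕ}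
    (hab : rf ((n : ℝ) + 1 + a + b + 1) (n + 2) ≠ 0) (k : ℕ) :
    jacobiCoeff a b (n + 1) k =
      jacobiCoeff a (b + 1) (n + 1) k +
        2 * (n + 1) * (n + 1 + a) /
          ((2 * (n + 1) + a + b) * (2 * (n + 1) + a + b + 1)) *
            jacobiCoeff a (b + 1) n k := by
  obtain ⟨t, ht⟩ : ∃ t : ℝ, t = n + 1 + a + b + 1 := ⟨_, rfl⟩
  have h₁ : (n : ℝ) + 1 + a + (b + 1) + 1 = t + 1 := by linear_combination -ht
  have h₂ : (n : ℝ) + a + (b + 1) + 1 = t := by linear_combination -ht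
  have h₃ : 2 * ((n : ℝ) + 1) + a + b = t + n := by linear_combination -ht
  have hn : (n : ℝ) + 1 ≠ 0 := n.cast_add_one_ne_zero
  rw [← ht, rf_ne_zero_iff] at hab
  have ht₀ : t ≠ 0 := by simpa using hab 0 (by omega)
  have htn : t + n ≠ 0 := hab n (by omega)
  have htn₁ : t + n + 1 ≠ 0 := by simpa [add_assoc] using hab (n + 1) (by omega)
  have hrf : rf t n ≠ 0 := rf_ne_zero_iff.mpr fun j hj => hab j (by omega)
  have hneg : rf (-(n : ℝ)) k = rf (-((n : ℝ) + 1)) k * (-(n + 1) + k) / -(n + 1) := by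
    rw [← rf_add_one (neg_ne_zero.mpr hn)]
    congr 1
    ring
  simp only [jacobiCoeff, Nat.cast_succ]
  rw [h₁, h₂, h₃, ← ht, hneg, rf_add_one ht₀, rf_add_one ht₀, rf_succ, rf_succ, pow_succ]
  push_cast
  rw [← add_assoc t]
  field_simp
  ring

theorem jacobi_eq_jacobi_b_add_one {a b : ℝ} {n : ℕ}
    (hab : rf ((n : ℝ) + a + b + 1) (n + 1) ≠ 0) (x : ℝ) :
    jacobi a b n x =
      jacobi a (b + 1) n x +
        2 * n * (n + a) / ((2 * n + a + b) * (2 * n + a + b + 1)) *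
          jacobi a (b + 1) (n - 1) x := by
  cases n with
  | zero => simp [jacobi_zero]
  | succ n =>
    push_cast at hab ⊢
    simp only [jacobi_eq_sum_range _ _ x (n + 1).lt_succ_self,
      jacobi_eq_sum_range _ _ x (show n < n + 1 + 1 by omega), Finset.mul_sum,
      ← Finset.sum_add_distrib, jacobiCoeff_succ_eq_jacobiCoeff_b_add_one hab,
      add_mul, mul_assoc]

theorem one_div_mul_add_one_div_mul {K : Type*} [Field K] {t : K} (ht₀ : t ≠ 0) (ht₁ : t + 1 ≠ 0)
    (ht₂ : t + 2 ≠ 0) :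
    1 / (t * (t + 1)) + 1 / ((t + 1) * (t + 2)) = 2 / (t * (t + 2)) := by
  field_simp
  ring

theorem jacobi_eq_jacobi_b_add_two {a b : ℝ} {n : ℕ}
    (hab : rf ((n : ℝ) + a + b + 1) (n + 2) ≠ 0) (x : ℝ) :
    jacobi a b n x =
      jacobi a (b + 2) n x +
        4 * n * (n + a) / ((2 * n + a + b) * (2 * n + a + b + 2)) * jacobi a (b + 2) (n - 1) x +
        4 * n * ↑(n - 1) * (n + a) * (n + a - 1) /
            ((2 * n + a + b - 1) * (2 * n + a + b) ^ 2 * (2 * n + a + b + 1)) *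
          jacobi a (b + 2) (n - 2) x := by
  have hn₁ : rf ((n : ℝ) + a + b + 1) (n + 1) ≠ 0 := left_ne_zero_of_mul (rf_succ _ _ ▸ hab)
  have hn₂ : rf ((n : ℝ) + a + (b + 1) + 1) (n + 1) ≠ 0 := by
    rw [← add_assoc]
    exact right_ne_zero_of_mul (rf_succ_left _ _ ▸ hab)
  rw [jacobi_eq_jacobi_b_add_one hn₁, jacobi_eq_jacobi_b_add_one hn₂]
  cases n with
  | zero => simp [add_assoc, one_add_one_eq_two]
  | succ n =>
    have hn₃ : rf ((n : ℝ) + a + (b + 1) + 1) (n + 1) ≠ 0 := by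
      convert left_ne_zero_of_mul (rf_succ _ _ ▸ hn₁) using 2
      push_cast
      ring
    rw [Nat.add_sub_cancel, jacobi_eq_jacobi_b_add_one hn₃, add_assoc b, one_add_one_eq_two]
    obtain ⟨t, ht⟩ : ∃ t : ℝ, t = 2 * (n + 1) + a + b := ⟨_, rfl⟩
    have hfac : ∀ i ≤ 2, t + (i : ℕ) ≠ 0 := fun i hi => by
      convert rf_ne_zero_iff.mp hab (n + i) (by omega) using 1
      push_cast
      linear_combination ht
    have hfrac : 1 / (t * (t + 1)) + 1 / ((t + 1) * (t + 2)) = 2 / (t * (t + 2)) :=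
      one_div_mul_add_one_div_mul (by simpa using hfac 0 (by omega))
        (by simpa using hfac 1 (by omega)) (by simpa using hfac 2 le_rfl)
    have hprod : 1 / (t * (t + 1)) * (1 / ((t - 1) * t)) = 1 / ((t - 1) * t ^ 2 * (t + 1)) := by
      rw [one_div_mul_one_div]
      ring
    have e₁ : 2 * ((n : ℝ) + 1) + a + (b + 1) = t + 1 := by linear_combination -ht
    have e₂ : 2 * (n : ℝ) + a + (b + 1) = t - 1 := by linear_combination -ht
    rw [Nat.cast_succ, e₁, e₂, ← ht, sub_add_cancel, add_assoc t, one_add_one_eq_two,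
      show n + 1 - 2 = n - 1 by omega]
    linear_combination 2 * (n + 1) * (n + 1 + a) * jacobi a (b + 2) n x * hfrac +
      4 * (n + 1) * n * (n + 1 + a) * (n + a) * jacobi a (b + 2) (n - 1) x * hprod

theorem jacobi_parameter_shift_ab (n : ℕ) (hn : 1 ≤ n) (a b x : ℝ)
    (hpoch1 : ∀ k ≤ n + 1, rf (a + 1) k ≠ 0)
    (hpoch1' : ∀ k ≤ n, rf (a + 2) k ≠ 0)
    (hpoch2 : ∀ m ≤ n + 1, rf ((m : ℝ) + a + b + 1) m ≠ 0)
    (h1 : 2 * (n : ℝ) + a + b ≠ 0) (h2 : 2 * (n : ℝ) + a + b + 1 ≠ 0)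
    (h3 : 2 * (n : ℝ) + a + b - 1 ≠ 0) (h4 : 2 * (n : ℝ) + 2 + a + b ≠ 0) :
    jacobi (a + 1) (b - 1) n x =
      (1 / ((n : ℝ) + 1)) * jacobiDeriv a b (n + 1) x +
        (4 * (a + 1 + n) / ((2 * n + 2 + a + b) * (2 * n + a + b))) *
          jacobiDeriv a b n x +
        (4 * (a + 1 + n) * (a + n) * n /
            ((2 * n + a + b - 1) * (2 * n + a + b + 1) * (2 * n + a + b) ^ 2)) *
          jacobiDeriv a b (n - 1) x := by
  have ha : a + 1 ≠ 0 := by simpa [rf] using hpoch1 1 (by omega)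
  have hs : (n : ℝ) + a + b + 1 ≠ 0 := by
    simpa using rf_ne_zero_iff.mp (hpoch2 n n.le_succ) 0 hn
  have hshift : rf ((n : ℝ) + (a + 1) + (b - 1) + 1) (n + 2) ≠ 0 := by
    rw [show (n : ℝ) + (a + 1) + (b - 1) + 1 = n + a + b + 1 by ring, rf_succ_left]
    convert mul_ne_zero hs (hpoch2 (n + 1) le_rfl) using 3
    push_cast
    ring
  rw [jacobi_eq_jacobi_b_add_two hshift,
    jacobiDeriv_eq_mul_jacobi ha (hpoch2 (n + 1) le_rfl),
    jacobiDeriv_eq_mul_jacobi ha (hpoch2 n (by omega)),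
    jacobiDeriv_eq_mul_jacobi ha (hpoch2 (n - 1) (by omega)), Nat.add_sub_cancel, Nat.sub_sub,
    show b - 1 + 2 = b + 1 by ring]
  push_cast
  field_simp
  ring
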